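/- Let F > 0 and, for each λ ∈ (0, Λ(A,B,F)), let t⁺_λ < t⁻_λ denote the two critical points of the fiber map φ_λ in (0,∞). Then the functions λ ↦ φ_λ(t⁻_λ) and λ ↦ φ_λ(t⁺_λ) are strictly decreasing on (0, Λ(A,B,F)): if 0 < λ₁ < λ₂ < Λ(A,B,F) then φ_{λ₂}(t⁻_{λ₂}) < φ_{λ₁}(t⁻_{λ₁}) and φ_{λ₂}(t⁺_{λ₂}) < φ_{λ₁}(t⁺_{λ₁}). -/

import Mathlib

/-!
For `t > 0` one has `φ_λ'(t) = t^(q-1) (g(t) - λ B)` with `g(t) = A t^(p-q) - F t^(γ-q)`, so the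
critical points of `φ_λ` are the solutions of `g = λ B`. In the variable `s = t^(p-q)` the function
`g` is strictly concave, being `A s - F s^((γ-q)/(p-q))`; hence for `x < y < z` the chord inequality
`gShape_chord` shows that `g` exceeds `λ B` exactly between the two critical points. Two consequences:

* `φ_λ` is strictly decreasing on `(0, t⁺_λ]` and strictly increasing on `[t⁺_λ, t⁻_λ]`;
* if `λ₁ < λ₂`, both critical points of `φ_{λ₂}` lie in `(t⁺_{λ₁}, t⁻_{λ₁})`, as there
  `g = λ₂ B > λ₁ B`.

Since `φ_{λ₂} < φ_{λ₁}` pointwise on `(0, ∞)`, it follows that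
`φ_{λ₂}(t⁻_{λ₂}) < φ_{λ₁}(t⁻_{λ₂}) < φ_{λ₁}(t⁻_{λ₁})` and
`φ_{λ₂}(t⁺_{λ₂}) < φ_{λ₂}(t⁺_{λ₁}) < φ_{λ₁}(t⁺_{λ₁})`.
-/

open Real Filter Topology Set

/-- The fiber map `φ_λ(t) = (A/p) t^p − (λB/q) t^q − (F/γ) t^γ`. -/
noncomputable def phi (p q γ A B F lam : ℝ) : ℝ → ℝ :=
  fun t => A / p * t ^ p - lam * B / q * t ^ q - F / γ * t ^ γ

/-- The extremal value `Λ(A,B,F)`. -/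
noncomputable def Lam (p q γ A B F : ℝ) : ℝ :=
  (γ - p) / (γ - q) * ((p - q) / (γ - q)) ^ ((p - q) / (γ - p)) *
    A ^ ((γ - q) / (γ - p)) / (B * F ^ ((p - q) / (γ - p)))

/-- The function `g(t) = A t^(p-q) - F t^(γ-q)`, whose level set at height `λ B` consists of the
critical points of `φ_λ`. -/
noncomputable def gShape (p q γ A F t : ℝ) : ℝ :=
  A * t ^ (p - q) - F * t ^ (γ - q)

lemma hasDerivAt_phi {p q γ A B F lam t : ℝ} (hq : 1 < q) (hqp : q < p) (hpγ : p < γ)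
    (ht : 0 < t) :
    HasDerivAt (phi p q γ A B F lam) (t ^ (q - 1) * (gShape p q γ A F t - lam * B)) t := by
  have d (r : ℝ) : HasDerivAt (fun t : ℝ => t ^ r) (r * t ^ (r - 1)) t :=
    Real.hasDerivAt_rpow_const (Or.inl ht.ne')
  have h := (((d p).const_mul (A / p)).sub ((d q).const_mul (lam * B / q))).sub
    ((d γ).const_mul (F / γ))
  have hp0 : p ≠ 0 := by linarith
  have hq0 : q ≠ 0 := by linarith
  have hγ0 : γ ≠ 0 := by linarith
  have e1 : t ^ (p - 1) = t ^ (q - 1) * t ^ (p - q) := by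
    rw [← Real.rpow_add ht]; congr 1; ring
  have e2 : t ^ (γ - 1) = t ^ (q - 1) * t ^ (γ - q) := by
    rw [← Real.rpow_add ht]; congr 1; ring
  refine h.congr_deriv ?_
  rw [e1, e2, gShape]
  field_simp
  ring

lemma deriv_phi_eq_zero_iff {p q γ A B F lam t : ℝ} (hq : 1 < q) (hqp : q < p) (hpγ : p < γ)
    (ht : 0 < t) :
    deriv (phi p q γ A B F lam) t = 0 ↔ gShape p q γ A F t = lam * B := by
  rw [(hasDerivAt_phi hq hqp hpγ ht).deriv, mul_eq_zero, sub_eq_zero]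
  exact or_iff_right (Real.rpow_pos_of_pos ht _).ne'

/-- Strict concavity of `gShape` in the variable `s = t^(p-q)`, stated as a chord inequality with
the denominators cleared. -/
lemma gShape_chord {p q γ A F x y z : ℝ} (hqp : q < p) (hpγ : p < γ) (hF : 0 < F)
    (hx : 0 < x) (hxy : x < y) (hyz : y < z) :
    (gShape p q γ A F z - gShape p q γ A F y) * (y ^ (p - q) - x ^ (p - q)) <
      (gShape p q γ A F y - gShape p q γ A F x) * (z ^ (p - q) - y ^ (p - q)) := by
  have hpq : 0 < p - q := sub_pos.2 hqp
  have hy := hx.trans hxy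
  have hz := hy.trans hyz
  have e {t : ℝ} (ht : 0 < t) : t ^ (γ - q) = (t ^ (p - q)) ^ ((γ - q) / (p - q)) := by
    rw [← Real.rpow_mul ht.le]; congr 1; field_simp
  have hr : 1 < (γ - q) / (p - q) := by rw [one_lt_div hpq]; linarith
  have hxy' := Real.rpow_lt_rpow hx.le hxy hpq
  have hyz' := Real.rpow_lt_rpow hy.le hyz hpq
  have hs := (strictConvexOn_rpow hr).slope_strict_mono_adjacent
    (Set.mem_Ici.2 (Real.rpow_nonneg hx.le (p - q)))
    (Set.mem_Ici.2 (Real.rpow_nonneg hz.le (p - q))) hxy' hyz'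
  rw [div_lt_div_iff₀ (sub_pos.2 hxy') (sub_pos.2 hyz'), ← e hx, ← e hy, ← e hz] at hs
  have := mul_lt_mul_of_pos_left hs hF
  simp only [gShape]
  linarith

lemma gShape_gt_of_between {p q γ A F a b c t : ℝ} (hqp : q < p) (hpγ : p < γ) (hF : 0 < F)
    (ha : 0 < a) (hga : gShape p q γ A F a = c) (hgb : gShape p q γ A F b = c)
    (hat : a < t) (htb : t < b) : c < gShape p q γ A F t := by
  have h := gShape_chord (A := A) hqp hpγ hF ha hat htb
  have h1 := Real.rpow_lt_rpow ha.le hat (sub_pos.2 hqp)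
  have h2 := Real.rpow_lt_rpow (ha.trans hat).le htb (sub_pos.2 hqp)
  rw [hga, hgb] at h
  by_contra! hc
  nlinarith

lemma gShape_lt_of_lt {p q γ A F a b c t : ℝ} (hqp : q < p) (hpγ : p < γ) (hF : 0 < F)
    (hab : a < b) (hga : gShape p q γ A F a = c) (hgb : gShape p q γ A F b = c)
    (ht : 0 < t) (hta : t < a) : gShape p q γ A F t < c := by
  have h := gShape_chord (A := A) hqp hpγ hF ht hta hab
  have h2 := Real.rpow_lt_rpow (ht.trans hta).le hab (sub_pos.2 hqp)
  rw [hga, hgb, sub_self, zero_mul] at h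
  exact sub_pos.1 (pos_of_mul_pos_left h (sub_pos.2 h2).le)

lemma gShape_lt_of_gt {p q γ A F a b c t : ℝ} (hqp : q < p) (hpγ : p < γ) (hF : 0 < F)
    (ha : 0 < a) (hab : a < b) (hga : gShape p q γ A F a = c) (hgb : gShape p q γ A F b = c)
    (hbt : b < t) : gShape p q γ A F t < c := by
  have h := gShape_chord (A := A) hqp hpγ hF ha hab hbt
  have h1 := Real.rpow_lt_rpow ha.le hab (sub_pos.2 hqp)
  rw [hga, hgb, sub_self, zero_mul] at h
  exact sub_neg.1 (neg_of_mul_neg_left h (sub_pos.2 h1).le)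

lemma between_of_gShape_gt {p q γ A F a b c t : ℝ} (hqp : q < p) (hpγ : p < γ) (hF : 0 < F)
    (ha : 0 < a) (hab : a < b) (hga : gShape p q γ A F a = c) (hgb : gShape p q γ A F b = c)
    (ht : 0 < t) (hc : c < gShape p q γ A F t) : a < t ∧ t < b := by
  constructor
  · by_contra! h
    rcases h.lt_or_eq with h | rfl
    · exact (gShape_lt_of_lt hqp hpγ hF hab hga hgb ht h).not_gt hc
    · exact hc.ne' hga
  · by_contra! h
    rcases h.lt_or_eq with h | rfl
    · exact (gShape_lt_of_gt hqp hpγ hF ha hab hga hgb h).not_gt hc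
    · exact hc.ne' hgb

lemma phi_lt_of_lam_lt {p q γ A B F lam₁ lam₂ t : ℝ} (hq : 1 < q) (hB : 0 < B)
    (h12 : lam₁ < lam₂) (ht : 0 < t) :
    phi p q γ A B F lam₂ t < phi p q γ A B F lam₁ t := by
  have hq0 : 0 < q := by linarith
  have : lam₁ * B / q * t ^ q < lam₂ * B / q * t ^ q := by
    have := Real.rpow_pos_of_pos ht q
    gcongr
  simp only [phi]
  linarith

/-- the reduced energies `λ ↦ φ_λ(t⁻_λ)` and `λ ↦ φ_λ(t⁺_λ)` are strictly
decreasing on `(0, Λ(A,B,F))`. -/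
theorem reduced_energies_decreasing (p q γ A B F : ℝ)
    (hq : 1 < q) (hqp : q < p) (hpγ : p < γ)
    (hA : 0 < A) (hB : 0 < B) (hF : 0 < F)
    (tplus tminus : ℝ → ℝ)
    (hbr : ∀ lam : ℝ, 0 < lam → lam < Lam p q γ A B F →
      0 < tplus lam ∧ tplus lam < tminus lam ∧
      deriv (phi p q γ A B F lam) (tplus lam) = 0 ∧
      deriv (phi p q γ A B F lam) (tminus lam) = 0 ∧
      ∀ t : ℝ, 0 < t → deriv (phi p q γ A B F lam) t = 0 →
        t = tplus lam ∨ t = tminus lam)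
    (lam₁ lam₂ : ℝ) (h1 : 0 < lam₁) (h12 : lam₁ < lam₂) (h2 : lam₂ < Lam p q γ A B F) :
    phi p q γ A B F lam₂ (tminus lam₂) < phi p q γ A B F lam₁ (tminus lam₁) ∧
    phi p q γ A B F lam₂ (tplus lam₂) < phi p q γ A B F lam₁ (tplus lam₁) := by
  obtain ⟨ha1, hab1, hga1, hgb1, -⟩ := hbr lam₁ h1 (h12.trans h2)
  obtain ⟨ha2, hab2, hga2, hgb2, -⟩ := hbr lam₂ (h1.trans h12) h2
  have hb1 := ha1.trans hab1
  have hb2 := ha2.trans hab2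
  rw [deriv_phi_eq_zero_iff hq hqp hpγ ha1] at hga1
  rw [deriv_phi_eq_zero_iff hq hqp hpγ hb1] at hgb1
  rw [deriv_phi_eq_zero_iff hq hqp hpγ ha2] at hga2
  rw [deriv_phi_eq_zero_iff hq hqp hpγ hb2] at hgb2
  have hlam : lam₁ * B < lam₂ * B := mul_lt_mul_of_pos_right h12 hB
  have hplus := between_of_gShape_gt hqp hpγ hF ha1 hab1 hga1 hgb1 ha2 (hga2 ▸ hlam)
  have hminus := between_of_gShape_gt hqp hpγ hF ha1 hab1 hga1 hgb1 hb2 (hgb2 ▸ hlam)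
  constructor
  · have hmono : StrictMonoOn (phi p q γ A B F lam₁) (Icc (tplus lam₁) (tminus lam₁)) := by
      refine strictMonoOn_of_deriv_pos (convex_Icc _ _) (fun t ht =>
        (hasDerivAt_phi hq hqp hpγ (ha1.trans_le ht.1)).continuousAt.continuousWithinAt) ?_
      rw [interior_Icc]
      intro t ht
      have ht0 := ha1.trans ht.1
      rw [(hasDerivAt_phi hq hqp hpγ ht0).deriv]
      exact mul_pos (Real.rpow_pos_of_pos ht0 _)
        (sub_pos.2 (gShape_gt_of_between hqp hpγ hF ha1 hga1 hgb1 ht.1 ht.2))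
    exact (phi_lt_of_lam_lt hq hB h12 hb2).trans
      (hmono ⟨hminus.1.le, hminus.2.le⟩ (right_mem_Icc.2 hab1.le) hminus.2)
  · have hanti : StrictAntiOn (phi p q γ A B F lam₂) (Icc (tplus lam₁) (tplus lam₂)) := by
      refine strictAntiOn_of_deriv_neg (convex_Icc _ _) (fun t ht =>
        (hasDerivAt_phi hq hqp hpγ (ha1.trans_le ht.1)).continuousAt.continuousWithinAt) ?_
      rw [interior_Icc]
      intro t ht
      have ht0 := ha1.trans ht.1
      rw [(hasDerivAt_phi hq hqp hpγ ht0).deriv]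
      exact mul_neg_of_pos_of_neg (Real.rpow_pos_of_pos ht0 _)
        (sub_neg.2 (gShape_lt_of_lt hqp hpγ hF hab2 hga2 hgb2 ht0 ht.2))
    exact (hanti (left_mem_Icc.2 hplus.1.le) (right_mem_Icc.2 hplus.1.le) hplus.1).trans
      (phi_lt_of_lam_lt hq hB h12 ha1)
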